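/- g₁ is a strictly increasing bijection from ℝ onto (0, ∞). Moreover, for every π ∈ (0,1), m > 0, and δ > 0, there exists exactly one ρ ∈ (0,1) satisfying π·δ·g(ρ/(2πmδ)) + (1−π)·δ·g(ρ/(2(1−π)mδ)) = 1 − ρ². -/

import Mathlib

open MeasureTheory

/-- The standard normal density. -/
noncomputable def normPDF (x : ℝ) : ℝ := Real.exp (-x ^ 2 / 2) / Real.sqrt (2 * Real.pi)

/-- The standard normal cumulative distribution function. -/
noncomputable def normCDF (x : ℝ) : ℝ := ∫ t in Set.Iic x, normPDF t

/-- `g₁(x) = x·Φ(x) + φ(x)`, equal to `E[(Z+x)₊]` for standard normal `Z`. -/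
noncomputable def g1 (x : ℝ) : ℝ := x * normCDF x + normPDF x

/-- `g₂(x) = (x²+1)·Φ(x) + x·φ(x)`, equal to `E[(Z+x)₊²]` for standard normal `Z`. -/
noncomputable def g2 (x : ℝ) : ℝ := (x ^ 2 + 1) * normCDF x + x * normPDF x

/-- The inverse of `g₁` (on its range `(0,∞)`). -/
noncomputable def g1inv : ℝ → ℝ := Function.invFun g1

/-- `g = g₂ ∘ g₁⁻¹`. -/
noncomputable def gfn (t : ℝ) : ℝ := g2 (g1inv t)

/-!
Since `g₁' = Φ > 0` and `g₂' = 2 g₁`, everything is governed by the behaviour at `-∞`. The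
Mills ratio bound `-x Φ(x) ≤ φ(x)` gives `0 ≤ g₁ ≤ φ` on `(-∞, 0]`, so `g₁` and `g₂ = x g₁ + Φ`
tend to `0` at `-∞`; being strictly increasing they are positive, and `g = g₂ ∘ g₁⁻¹` is
continuous and strictly increasing on `(0, ∞)` with limit `0` at `0⁺`. Hence the left-hand side
plus `ρ²` increases continuously from `0` at `ρ = 0⁺` to a value above `1` at `ρ = 1`, and it
takes the value `1` exactly once in between.
-/

open Filter ProbabilityTheory Set
open scoped Topology

theorem lt_of_strictMono_of_tendsto_atBot {α β : Type*} [PartialOrder α] [IsCodirectedOrder α]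
    [NoMinOrder α] [TopologicalSpace β] [Preorder β] [OrderClosedTopology β] {f : α → β} {b : β}
    (hf : StrictMono f) (hb : Tendsto f atBot (𝓝 b)) (x : α) : b < f x := by
  obtain ⟨y, hyx⟩ := exists_lt x
  exact (hf.monotone.le_of_tendsto hb y).trans_lt (hf hyx)

theorem existsUnique_mem_Ioo_eq_of_injOn {α β : Type*} [ConditionallyCompleteLinearOrder α]
    [TopologicalSpace α] [OrderTopology α] [DenselyOrdered α] [LinearOrder β] [TopologicalSpace β]
    [OrderClosedTopology β] {f : α → β} {a b : α} {l y : β} (hab : a < b)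
    (hinj : InjOn f (Ioc a b)) (hcont : ContinuousOn f (Ioc a b)) (hl : Tendsto f (𝓝[>] a) (𝓝 l))
    (hly : l < y) (hyb : y < f b) : ∃! x, x ∈ Ioo a b ∧ f x = y := by
  have : (𝓝[>] a).NeBot := nhdsGT_neBot_of_exists_gt ⟨b, hab⟩
  have hle : 𝓝[>] a ≤ 𝓟 (Ioc a b) := le_principal_iff.2 (Ioc_mem_nhdsGT hab)
  obtain ⟨x, hx, rfl⟩ :=
    isPreconnected_Ioc.intermediate_value_Ioc (right_mem_Ioc.2 hab) hle hcont hl ⟨hly, hyb.le⟩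
  have hxb : x < b := hx.2.lt_of_ne fun h => hyb.ne (congrArg f h)
  exact ⟨x, ⟨⟨hx.1, hxb⟩, rfl⟩, fun z hz => hinj (Ioo_subset_Ioc_self hz.1) hx hz.2⟩

theorem normPDF_eq_gaussianPDFReal : normPDF = gaussianPDFReal 0 1 := by
  funext x
  simp [normPDF, gaussianPDFReal, div_eq_inv_mul]

theorem normPDF_pos (x : ℝ) : 0 < normPDF x := by
  rw [normPDF_eq_gaussianPDFReal]
  exact gaussianPDFReal_pos 0 1 x one_ne_zero

theorem integrable_normPDF : Integrable normPDF := by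
  rw [normPDF_eq_gaussianPDFReal]
  exact integrable_gaussianPDFReal 0 1

theorem hasDerivAt_normPDF (x : ℝ) : HasDerivAt normPDF (-x * normPDF x) x := by
  have hexponent : HasDerivAt (fun t : ℝ => -t ^ 2 / 2) (-x) x :=
    ((hasDerivAt_pow 2 x).neg.div_const 2).congr_deriv (by ring)
  exact (hexponent.exp.div_const _).congr_deriv (by rw [normPDF]; ring)

theorem continuous_normPDF : Continuous normPDF :=
  continuous_iff_continuousAt.2 fun x => (hasDerivAt_normPDF x).continuousAt

theorem normPDF_eq_mul_exp (x : ℝ) :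
    normPDF x = (√(2 * Real.pi))⁻¹ * Real.exp (-(1 / 2) * x ^ 2) := by
  rw [normPDF, div_eq_inv_mul]
  ring_nf

theorem integrable_mul_normPDF : Integrable fun x => x * normPDF x := by
  simp only [normPDF_eq_mul_exp, mul_left_comm _ (√(2 * Real.pi))⁻¹]
  exact (integrable_mul_exp_neg_mul_sq one_half_pos).const_mul _

theorem tendsto_abs_pow_mul_normPDF_cocompact (n : ℕ) :
    Tendsto (fun x => |x| ^ n * normPDF x) (cocompact ℝ) (𝓝 0) := by
  simp only [normPDF_eq_mul_exp, mul_left_comm _ (√(2 * Real.pi))⁻¹]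
  simpa using
    (tendsto_rpow_abs_mul_exp_neg_mul_sq_cocompact one_half_pos n).const_mul (√(2 * Real.pi))⁻¹

theorem tendsto_normPDF_atBot : Tendsto normPDF atBot (𝓝 0) := by
  simpa using (tendsto_abs_pow_mul_normPDF_cocompact 0).mono_left atBot_le_cocompact

theorem normCDF_eq_cdf_gaussianReal : normCDF = cdf (gaussianReal 0 1) := by
  funext x
  rw [cdf_eq_real, measureReal_def, gaussianReal_apply_eq_integral 0 one_ne_zero,
    ENNReal.toReal_ofReal (integral_nonneg (gaussianPDFReal_nonneg 0 1)), normCDF,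
    normPDF_eq_gaussianPDFReal]

theorem tendsto_normCDF_atBot : Tendsto normCDF atBot (𝓝 0) := by
  rw [normCDF_eq_cdf_gaussianReal]
  exact tendsto_cdf_atBot _

theorem tendsto_normCDF_atTop : Tendsto normCDF atTop (𝓝 1) := by
  rw [normCDF_eq_cdf_gaussianReal]
  exact tendsto_cdf_atTop _

theorem hasDerivAt_normCDF (x : ℝ) : HasDerivAt normCDF (normPDF x) x := by
  have hsplit : normCDF = fun y => normCDF 0 + ∫ t in (0 : ℝ)..y, normPDF t := by
    funext y
    rw [← intervalIntegral.integral_Iic_sub_Iic integrable_normPDF.integrableOn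
      integrable_normPDF.integrableOn, normCDF, normCDF, add_sub_cancel]
  rw [hsplit]
  exact (continuous_normPDF.integral_hasStrictDerivAt 0 x).hasDerivAt.const_add _

theorem strictMono_normCDF : StrictMono normCDF :=
  strictMono_of_hasDerivAt_pos hasDerivAt_normCDF normPDF_pos

theorem normCDF_pos (x : ℝ) : 0 < normCDF x :=
  lt_of_strictMono_of_tendsto_atBot strictMono_normCDF tendsto_normCDF_atBot x

-- The Mills ratio bound: `φ(x) = ∫_{t ≤ x} -t φ(t) dt`, and `-x ≤ -t` on the domain of integration.
theorem neg_mul_normCDF_le_normPDF (x : ℝ) : -x * normCDF x ≤ normPDF x := by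
  have hint : Integrable fun t => -t * normPDF t := by
    simpa only [neg_mul] using! integrable_mul_normPDF.neg
  calc -x * normCDF x = ∫ t in Iic x, -x * normPDF t := (integral_const_mul _ _).symm
    _ ≤ ∫ t in Iic x, -t * normPDF t :=
      setIntegral_mono_on (integrable_normPDF.const_mul _).integrableOn hint.integrableOn
        measurableSet_Iic fun t ht =>
          mul_le_mul_of_nonneg_right (neg_le_neg ht) (normPDF_pos t).le
    _ = normPDF x := by
      rw [integral_Iic_of_hasDerivAt_of_tendsto' (fun t _ => hasDerivAt_normPDF t)
        hint.integrableOn tendsto_normPDF_atBot, sub_zero]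

theorem hasDerivAt_g1 (x : ℝ) : HasDerivAt g1 (normCDF x) x :=
  (((hasDerivAt_id x).mul (hasDerivAt_normCDF x)).add (hasDerivAt_normPDF x)).congr_deriv
    (by simp)

theorem continuous_g1 : Continuous g1 :=
  continuous_iff_continuousAt.2 fun x => (hasDerivAt_g1 x).continuousAt

theorem strictMono_g1 : StrictMono g1 :=
  strictMono_of_hasDerivAt_pos hasDerivAt_g1 normCDF_pos

theorem g1_nonneg (x : ℝ) : 0 ≤ g1 x := by
  have := neg_mul_normCDF_le_normPDF x
  rw [g1]
  linarith

theorem g1_le_normPDF {x : ℝ} (hx : x ≤ 0) : g1 x ≤ normPDF x :=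
  add_le_of_nonpos_left (mul_nonpos_of_nonpos_of_nonneg hx (normCDF_pos x).le)

theorem tendsto_g1_atBot : Tendsto g1 atBot (𝓝 0) :=
  tendsto_of_tendsto_of_tendsto_of_le_of_le' tendsto_const_nhds tendsto_normPDF_atBot
    (.of_forall g1_nonneg) ((eventually_le_atBot 0).mono fun _ => g1_le_normPDF)

theorem tendsto_g1_atTop : Tendsto g1 atTop atTop :=
  tendsto_atTop_mono (fun x => le_add_of_nonneg_right (normPDF_pos x).le)
    (tendsto_id.atTop_mul_pos one_pos tendsto_normCDF_atTop)

theorem g1_pos (x : ℝ) : 0 < g1 x :=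
  lt_of_strictMono_of_tendsto_atBot strictMono_g1 tendsto_g1_atBot x

theorem bijOn_g1 : BijOn g1 univ (Ioi 0) :=
  ⟨fun x _ => g1_pos x, strictMono_g1.injective.injOn,
    isPreconnected_univ.intermediate_value_Ioi (by simp) (by simp) continuous_g1.continuousOn
      tendsto_g1_atBot tendsto_g1_atTop⟩

theorem g2_eq_mul_g1_add_normCDF (x : ℝ) : g2 x = x * g1 x + normCDF x := by
  rw [g2, g1]
  ring

theorem hasDerivAt_g2 (x : ℝ) : HasDerivAt g2 (2 * g1 x) x := by
  rw [funext g2_eq_mul_g1_add_normCDF]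
  refine (((hasDerivAt_id x).mul (hasDerivAt_g1 x)).add (hasDerivAt_normCDF x)).congr_deriv ?_
  simp only [g1, id_eq]
  ring

theorem continuous_g2 : Continuous g2 :=
  continuous_iff_continuousAt.2 fun x => (hasDerivAt_g2 x).continuousAt

theorem strictMono_g2 : StrictMono g2 :=
  strictMono_of_hasDerivAt_pos hasDerivAt_g2 fun x => mul_pos two_pos (g1_pos x)

theorem tendsto_mul_g1_atBot : Tendsto (fun x => x * g1 x) atBot (𝓝 0) := by
  refine squeeze_zero_norm' ?_
    ((tendsto_abs_pow_mul_normPDF_cocompact 1).mono_left atBot_le_cocompact)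
  filter_upwards [eventually_le_atBot 0] with x hx
  rw [Real.norm_eq_abs, abs_mul, abs_of_pos (g1_pos x), pow_one]
  exact mul_le_mul_of_nonneg_left (g1_le_normPDF hx) (abs_nonneg x)

theorem tendsto_g2_atBot : Tendsto g2 atBot (𝓝 0) := by
  rw [funext g2_eq_mul_g1_add_normCDF]
  simpa using tendsto_mul_g1_atBot.add tendsto_normCDF_atBot

theorem g2_pos (x : ℝ) : 0 < g2 x :=
  lt_of_strictMono_of_tendsto_atBot strictMono_g2 tendsto_g2_atBot x

/-- `g₁` as an order isomorphism of `ℝ` onto `(0, ∞)`. Its inverse carries the order-theoretic and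
topological properties of `g1inv`, whose values off `(0, ∞)` are junk. -/
noncomputable def g1OrderIso : ℝ ≃o Ioi (0 : ℝ) :=
  StrictMono.orderIsoOfSurjective (fun x => ⟨g1 x, g1_pos x⟩) (fun _ _ h => strictMono_g1 h)
    fun t => (bijOn_g1.surjOn t.2).imp fun _ hx => Subtype.ext hx.2

theorem domRestrict_g1inv : (Ioi 0).domRestrict g1inv = g1OrderIso.symm := by
  funext t
  obtain ⟨x, rfl⟩ := g1OrderIso.surjective t
  rw [OrderIso.symm_apply_apply]
  exact Function.leftInverse_invFun strictMono_g1.injective x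

theorem strictMonoOn_g1inv : StrictMonoOn g1inv (Ioi 0) := by
  rw [← strictMono_domRestrict, domRestrict_g1inv]
  exact g1OrderIso.symm.strictMono

theorem continuousOn_g1inv : ContinuousOn g1inv (Ioi 0) := by
  rw [continuousOn_iff_continuous_domRestrict, domRestrict_g1inv]
  exact g1OrderIso.symm.continuous

theorem tendsto_g1inv_nhdsGT_zero : Tendsto g1inv (𝓝[>] 0) atBot := by
  rw [← tendsto_comp_coe_Ioi_atBot]
  change Tendsto ((Ioi 0).domRestrict g1inv) atBot atBot
  rw [domRestrict_g1inv]
  exact g1OrderIso.symm.tendsto_atBot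

theorem gfn_pos (t : ℝ) : 0 < gfn t :=
  g2_pos (g1inv t)

theorem strictMonoOn_gfn : StrictMonoOn gfn (Ioi 0) :=
  strictMono_g2.comp_strictMonoOn strictMonoOn_g1inv

theorem continuousOn_gfn : ContinuousOn gfn (Ioi 0) :=
  continuous_g2.comp_continuousOn continuousOn_g1inv

theorem tendsto_gfn_nhdsGT_zero : Tendsto gfn (𝓝[>] 0) (𝓝 0) :=
  tendsto_g2_atBot.comp tendsto_g1inv_nhdsGT_zero

section Rescaling

variable {h : ℝ → ℝ} {a c : ℝ}

theorem strictMonoOn_const_mul_comp_div (ha : 0 < a) (hc : 0 < c) (hh : StrictMonoOn h (Ioi 0)) :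
    StrictMonoOn (fun x => a * h (x / c)) (Ioi 0) := fun _ hx _ hy hxy =>
  mul_lt_mul_of_pos_left (hh (div_pos hx hc) (div_pos hy hc) (div_lt_div_of_pos_right hxy hc)) ha

theorem continuousOn_const_mul_comp_div (hc : 0 < c) (hh : ContinuousOn h (Ioi 0)) :
    ContinuousOn (fun x => a * h (x / c)) (Ioi 0) :=
  (hh.comp (continuous_id.div_const c).continuousOn fun _ hx => div_pos hx hc).const_mul a

theorem tendsto_const_mul_comp_div_nhdsGT_zero {l : ℝ} (hc : 0 < c)
    (hh : Tendsto h (𝓝[>] 0) (𝓝 l)) :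
    Tendsto (fun x => a * h (x / c)) (𝓝[>] 0) (𝓝 (a * l)) := by
  have hdiv : Tendsto (fun x : ℝ => x / c) (𝓝[>] 0) (𝓝[>] 0) := by
    refine tendsto_nhdsWithin_iff.2 ⟨?_, eventually_mem_nhdsWithin.mono fun x hx => div_pos hx hc⟩
    simpa using ((continuous_id.div_const c).tendsto 0).mono_left nhdsWithin_le_nhds
  exact (hh.comp hdiv).const_mul a

end Rescaling

theorem existsUnique_mul_gfn_div_add_mul_gfn_div_eq_one_sub_sq {a b c d : ℝ} (ha : 0 < a)
    (hb : 0 < b) (hc : 0 < c) (hd : 0 < d) :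
    ∃! ρ : ℝ, ρ ∈ Ioo (0 : ℝ) 1 ∧ a * gfn (ρ / c) + b * gfn (ρ / d) = 1 - ρ ^ 2 := by
  have hmono : StrictMonoOn (fun ρ => a * gfn (ρ / c) + b * gfn (ρ / d) + ρ ^ 2) (Ioi 0) :=
    ((strictMonoOn_const_mul_comp_div ha hc strictMonoOn_gfn).add
      (strictMonoOn_const_mul_comp_div hb hd strictMonoOn_gfn)).add
      fun _ hx _ _ hxy => pow_lt_pow_left₀ hxy (le_of_lt hx) two_ne_zero
  have hcont : ContinuousOn (fun ρ => a * gfn (ρ / c) + b * gfn (ρ / d) + ρ ^ 2) (Ioi 0) :=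
    ((continuousOn_const_mul_comp_div hc continuousOn_gfn).add
      (continuousOn_const_mul_comp_div hd continuousOn_gfn)).add (continuousOn_pow 2)
  have hlim : Tendsto (fun ρ => a * gfn (ρ / c) + b * gfn (ρ / d) + ρ ^ 2) (𝓝[>] 0) (𝓝 0) := by
    simpa using ((tendsto_const_mul_comp_div_nhdsGT_zero hc tendsto_gfn_nhdsGT_zero).add
      (tendsto_const_mul_comp_div_nhdsGT_zero hd tendsto_gfn_nhdsGT_zero)).add
      (((continuous_pow 2).tendsto (0 : ℝ)).mono_left nhdsWithin_le_nhds)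
  have hone : 1 < a * gfn (1 / c) + b * gfn (1 / d) + 1 ^ 2 := by
    have := mul_pos ha (gfn_pos (1 / c))
    have := mul_pos hb (gfn_pos (1 / d))
    linarith
  simp only [eq_sub_iff_add_eq]
  exact existsUnique_mem_Ioo_eq_of_injOn one_pos (hmono.injOn.mono Ioc_subset_Ioi_self)
    (hcont.mono Ioc_subset_Ioi_self) hlim one_pos hone

/-- `g₁` is a strictly increasing bijection from `ℝ` onto
`(0,∞)`, and for all `π ∈ (0,1)`, `m > 0`, `δ > 0` there is exactly one
`ρ ∈ (0,1)` solving the fixed-point equation for the limiting cosine angle. -/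
theorem stmt_11 :
    (StrictMono g1 ∧ Set.BijOn g1 Set.univ (Set.Ioi 0)) ∧
    ∀ p m δ : ℝ, p ∈ Set.Ioo (0 : ℝ) 1 → 0 < m → 0 < δ →
      ∃! ρ : ℝ, ρ ∈ Set.Ioo (0 : ℝ) 1 ∧
        p * δ * gfn (ρ / (2 * p * m * δ)) +
            (1 - p) * δ * gfn (ρ / (2 * (1 - p) * m * δ)) =
          1 - ρ ^ 2 := by
  refine ⟨⟨strictMono_g1, bijOn_g1⟩, ?_⟩
  rintro p m δ ⟨hp, hp1⟩ hm hδ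
  have : 0 < 1 - p := sub_pos.2 hp1
  exact existsUnique_mul_gfn_div_add_mul_gfn_div_eq_one_sub_sq (by positivity) (by positivity)
    (by positivity) (by positivity)
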